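/- In the k-block finite pool-based AL model, suppose the block tilted information is almost surely constant: j_k(W^k,U^k,H) = k·R almost surely under the joint law of the selection. Let b > 0 and n be a positive integer with |𝒯| ≤ e^{b·n}, let ε ∈ [0,1), and suppose P[ 𝖽_k(W^k,H) > d ] ≤ ε. Then b·n ≥ k·R − log( 1/(1−ε) ). -/

import Mathlib

open scoped BigOperators

/-- The joint mass function of `k` independent input-output pairs sums to one. -/
lemma sum_prod_mul_kernel_eq_one {α β : Type*} [Fintype α] [Fintype β] (k : ℕ)
    (p : α → ℝ) (hp : ∑ a, p a = 1) (K : α → β → ℝ) (hK : ∀ a, ∑ b, K a b = 1) :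
    ∑ a : Fin k → α, ∑ b : Fin k → β, ∏ i, p (a i) * K (a i) (b i) = 1 := by
  classical
  have inner (a : Fin k → α) :
      ∑ b : Fin k → β, ∏ i, p (a i) * K (a i) (b i) = ∏ i, p (a i) := by
    rw [← Fintype.prod_sum (fun i b => p (a i) * K (a i) b)]
    simp [← Finset.mul_sum, hK]
  simp_rw [inner]
  rw [← Fintype.prod_sum (fun (_ : Fin k) a => p a)]
  simp [hp]

/-- One-shot change-of-measure bound for a Markov chain `W → U → T → H`: if, on the part of the
support where `good` holds, the marginal of `U` is at most `Q h u / c`, then the probability of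
`good` is at most `|𝒯| / c`. -/
lemma mul_prob_le_card_of_marginal_mul_le {𝒲 𝒰 𝒯 ℋ : Type*}
    [Fintype 𝒲] [Fintype 𝒰] [Fintype 𝒯] [Fintype ℋ]
    (p : 𝒲 → 𝒰 → ℝ) (hp0 : ∀ w u, 0 ≤ p w u)
    (PT : 𝒰 → 𝒯 → ℝ) (hPT0 : ∀ u t, 0 ≤ PT u t) (hPT1 : ∀ u, ∑ t, PT u t = 1)
    (PH : 𝒯 → ℋ → ℝ) (hPH0 : ∀ t h, 0 ≤ PH t h) (hPH1 : ∀ t, ∑ h, PH t h = 1)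
    (Q : ℋ → 𝒰 → ℝ) (hQ0 : ∀ h u, 0 ≤ Q h u) (hQ1 : ∀ h, ∑ u, Q h u = 1)
    (good : 𝒲 → ℋ → Prop) [∀ w h, Decidable (good w h)] (c : ℝ) (hc : 0 ≤ c)
    (hgood : ∀ w u t h, p w u * PT u t * PH t h ≠ 0 → good w h →
      c * ∑ w', p w' u ≤ Q h u) :
    c * ∑ w, ∑ u, ∑ t, ∑ h, (if good w h then p w u * PT u t * PH t h else 0)
      ≤ Fintype.card 𝒯 := by
  have pointwise (u : 𝒰) (t : 𝒯) (h : ℋ) :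
      c * ∑ w, (if good w h then p w u * PT u t * PH t h else 0) ≤ Q h u * PH t h := by
    by_cases hex : ∃ w, p w u * PT u t * PH t h ≠ 0 ∧ good w h
    · obtain ⟨w, hne, hw⟩ := hex
      have hPT : PT u t ≤ 1 := by
        rw [← hPT1 u]
        exact Finset.single_le_sum (fun t _ => hPT0 u t) (Finset.mem_univ t)
      calc c * ∑ w, (if good w h then p w u * PT u t * PH t h else 0)
          ≤ c * ∑ w, p w u * PH t h := by
            gcongr with w _
            split_ifs
            · exact mul_le_mul_of_nonneg_right
                (mul_le_of_le_one_right (hp0 w u) hPT) (hPH0 t h)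
            · exact mul_nonneg (hp0 w u) (hPH0 t h)
        _ = (c * ∑ w, p w u) * PH t h := by rw [← Finset.sum_mul, mul_assoc]
        _ ≤ Q h u * PH t h :=
            mul_le_mul_of_nonneg_right (hgood w u t h hne hw) (hPH0 t h)
    · push Not at hex
      rw [Finset.sum_eq_zero, mul_zero]
      · exact mul_nonneg (hQ0 h u) (hPH0 t h)
      · intro w _
        split_ifs with hw
        · by_contra hne
          exact hex w hne hw
        · rfl
  have reorder : ∑ w, ∑ u, ∑ t, ∑ h, (if good w h then p w u * PT u t * PH t h else 0)
      = ∑ t, ∑ h, ∑ u, ∑ w, (if good w h then p w u * PT u t * PH t h else 0) := by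
    rw [Finset.sum_comm]
    conv_lhs =>
      enter [2, u]
      rw [Finset.sum_comm]
      enter [2, t]
      rw [Finset.sum_comm]
    rw [Finset.sum_comm]
    exact Finset.sum_congr rfl fun t _ => Finset.sum_comm
  rw [reorder]
  simp_rw [Finset.mul_sum] at pointwise ⊢
  calc _ ≤ ∑ t, ∑ h, ∑ u, Q h u * PH t h := by
        gcongr with t _ h _ u _
        exact pointwise u t h
    _ = Fintype.card 𝒯 := by simp [← Finset.sum_mul, hQ1, hPH1]

/-- **Converse bound on the rate in the `k`-block finite pool-based AL model when the
block tilted information is almost surely constant** (the `V = 0` case in the proof of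
Theorem 2 of the paper).

`k`-block model: `W^k = (W_1,…,W_k)` i.i.d. with pmf `PW`; given `W^k` the pools
`U^k = (U_1,…,U_k)` are conditionally independent with `U_i ∼ PU (W_i)`; a data
selection kernel `PT` from `𝒰^k` to `𝒯` and a learning kernel `PH` from `𝒯` to `ℋ`,
so the joint law of `(W^k,U^k,T,H)` is
`(∏ i, PW (w i) * PU (w i) (u i)) * PT u t * PH t h`.
Block distortion `dst_k (w,h) = (1/k) ∑ i, dst (w i) h`; block tilted information
`j_k(w,u,h) = log (Qk h u / P_{U^k} u) + lam * k * (dst_k (w,h) - d)` where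
`P_{U^k} u = ∑ w, ∏ i, PW (w i) * PU (w i) (u i)`.

If `j_k(W^k,U^k,H) = k·R` almost surely under the joint law, `|𝒯| ≤ exp (b*n)`,
`ε ∈ [0,1)` and `P[dst_k (W^k,H) > d] ≤ ε`, then `b·n ≥ k·R − log (1/(1−ε))`. -/
theorem rate_converse_block_constant_tilted
    {𝒲 𝒰 𝒯 ℋ : Type*} [Fintype 𝒲] [Nonempty 𝒲] [Fintype 𝒰] [Nonempty 𝒰]
    [Fintype 𝒯] [Nonempty 𝒯] [Fintype ℋ] [Nonempty ℋ]
    (k : ℕ) (hk : 0 < k)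
    (PW : 𝒲 → ℝ) (hPW0 : ∀ w, 0 ≤ PW w) (hPW1 : ∑ w, PW w = 1)
    (PU : 𝒲 → 𝒰 → ℝ) (hPU0 : ∀ w u, 0 ≤ PU w u) (hPU1 : ∀ w, ∑ u, PU w u = 1)
    (PT : (Fin k → 𝒰) → 𝒯 → ℝ) (hPT0 : ∀ u t, 0 ≤ PT u t) (hPT1 : ∀ u, ∑ t, PT u t = 1)
    (PH : 𝒯 → ℋ → ℝ) (hPH0 : ∀ t h, 0 ≤ PH t h) (hPH1 : ∀ t, ∑ h, PH t h = 1)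
    (dst : 𝒲 → ℋ → ℝ) (hdst : ∀ w h, 0 ≤ dst w h) (d : ℝ) (hd : 0 ≤ d)
    (lam : ℝ) (hlam : 0 ≤ lam)
    (Qk : ℋ → (Fin k → 𝒰) → ℝ) (hQ0 : ∀ h u, 0 ≤ Qk h u) (hQ1 : ∀ h, ∑ u, Qk h u = 1)
    (R : ℝ)
    (hconst : ∀ (w : Fin k → 𝒲) (u : Fin k → 𝒰) (t : 𝒯) (h : ℋ),
      (∏ i, PW (w i) * PU (w i) (u i)) * PT u t * PH t h ≠ 0 →
        Real.log (Qk h u / ∑ w' : Fin k → 𝒲, ∏ i, PW (w' i) * PU (w' i) (u i))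
            + lam * k * ((1 / (k : ℝ)) * (∑ i, dst (w i) h) - d) = k * R)
    (b : ℝ) (hb : 0 < b) (n : ℕ) (hn : 0 < n)
    (hcard : (Fintype.card 𝒯 : ℝ) ≤ Real.exp (b * n))
    (ε : ℝ) (hε0 : 0 ≤ ε) (hε1 : ε < 1)
    (hexcess : (∑ w : Fin k → 𝒲, ∑ u : Fin k → 𝒰, ∑ t, ∑ h,
        if d < (1 / (k : ℝ)) * ∑ i, dst (w i) h
        then (∏ i, PW (w i) * PU (w i) (u i)) * PT u t * PH t h else 0) ≤ ε) :
    k * R - Real.log (1 / (1 - ε)) ≤ b * n := by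
  have hlog : 0 ≤ Real.log (1 / (1 - ε)) :=
    Real.log_nonneg ((one_le_div (by linarith)).2 (by linarith))
  rcases le_or_gt ((k : ℝ) * R) 0 with hR | hR
  · have : 0 ≤ b * n := by positivity
    linarith
  have hp0 (w : Fin k → 𝒲) (u : Fin k → 𝒰) : 0 ≤ ∏ i, PW (w i) * PU (w i) (u i) :=
    Finset.prod_nonneg fun i _ => mul_nonneg (hPW0 _) (hPU0 _ _)
  have hbound := mul_prob_le_card_of_marginal_mul_le
    (fun (w : Fin k → 𝒲) (u : Fin k → 𝒰) => ∏ i, PW (w i) * PU (w i) (u i)) hp0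
    PT hPT0 hPT1 PH hPH0 hPH1 Qk hQ0 hQ1
    (fun w h => ¬ d < (1 / (k : ℝ)) * ∑ i, dst (w i) h)
    (Real.exp (k * R)) (Real.exp_pos _).le (by
      intro w u t h hne hw
      have hj := hconst w u t h hne
      have htilt : lam * k * ((1 / (k : ℝ)) * (∑ i, dst (w i) h) - d) ≤ 0 :=
        mul_nonpos_of_nonneg_of_nonpos (by positivity) (by linarith)
      have hlogQ : k * R ≤
          Real.log (Qk h u / ∑ w' : Fin k → 𝒲, ∏ i, PW (w' i) * PU (w' i) (u i)) := by
        linarith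
      have hpos : 0 < ∑ w' : Fin k → 𝒲, ∏ i, PW (w' i) * PU (w' i) (u i) :=
        Finset.sum_pos' (fun w' _ => hp0 w' u) ⟨w, Finset.mem_univ w,
          (hp0 w u).lt_of_ne' (left_ne_zero_of_mul (left_ne_zero_of_mul hne))⟩
      have hQne : Qk h u ≠ 0 := by
        intro hQ
        rw [hQ, zero_div, Real.log_zero] at hlogQ
        linarith
      rw [Real.le_log_iff_exp_le (div_pos ((hQ0 h u).lt_of_ne' hQne) hpos)] at hlogQ
      exact (le_div_iff₀ hpos).1 hlogQ)
  have htotal : ∑ w : Fin k → 𝒲, ∑ u : Fin k → 𝒰, ∑ t, ∑ h,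
      (∏ i, PW (w i) * PU (w i) (u i)) * PT u t * PH t h = 1 := by
    simp_rw [← Finset.mul_sum, hPH1, mul_one, ← Finset.mul_sum, hPT1, mul_one]
    exact sum_prod_mul_kernel_eq_one k PW hPW1 PU hPU1
  have hsplit : (∑ w : Fin k → 𝒲, ∑ u : Fin k → 𝒰, ∑ t, ∑ h,
        if d < (1 / (k : ℝ)) * ∑ i, dst (w i) h
        then (∏ i, PW (w i) * PU (w i) (u i)) * PT u t * PH t h else 0)
      + (∑ w : Fin k → 𝒲, ∑ u : Fin k → 𝒰, ∑ t, ∑ h,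
        if ¬ d < (1 / (k : ℝ)) * ∑ i, dst (w i) h
        then (∏ i, PW (w i) * PU (w i) (u i)) * PT u t * PH t h else 0) = 1 := by
    rw [← htotal]
    simp_rw [← Finset.sum_add_distrib]
    refine Finset.sum_congr rfl fun w _ => Finset.sum_congr rfl fun u _ =>
      Finset.sum_congr rfl fun t _ => Finset.sum_congr rfl fun h _ => ?_
    split_ifs <;> simp
  have hexp : Real.exp (k * R) * (1 - ε) ≤ Real.exp (b * n) :=
    (mul_le_mul_of_nonneg_left (by linarith) (Real.exp_pos _).le).trans (hbound.trans hcard)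
  have hε : 0 < 1 - ε := by linarith
  rw [one_div, Real.log_inv, sub_neg_eq_add, ← Real.exp_le_exp, Real.exp_add, Real.exp_log hε]
  exact hexp
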